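/- arXiv:1703.10081 — 3 statements merged into one kernel-verified Lean document; each statement's English description precedes it below -/
import Mathlib

section
/- A recurrent set S ⊆ A* is completely reducible over ℚ if and only if its eventual kernel is trivial: EK(S) = {0}. -/
namespace Birec

variable {A : Type*}

/-- The left quotient `u⁻¹S = {v | u v ∈ S}`. -/
def leftQuot (S : Set (List A)) (u : List A) : Set (List A) := {v | u ++ v ∈ S}

/-- A language is recognizable iff it has finitely many left quotients (Nerode). -/
def Recognizable (S : Set (List A)) : Prop := (Set.range (leftQuot S)).Finite

/-- The reversal `S̃` of a language. -/
def langRev (S : Set (List A)) : Set (List A) := {w | w.reverse ∈ S}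

/-- A recognizable set is recurrent if its minimal automaton (whose states are the
nonempty left quotients) is strongly connected. -/
def Recurrent (S : Set (List A)) : Prop :=
  Recognizable S ∧
    ∀ u v : List A, (leftQuot S u).Nonempty → (leftQuot S v).Nonempty →
      ∃ w : List A, leftQuot S (u ++ w) = leftQuot S v

/-- A set is birecurrent if it is recurrent together with its reversal. -/
def Birecurrent (S : Set (List A)) : Prop := Recurrent S ∧ Recurrent (langRev S)

/-- A set is dense if every word is a factor of one of its words. -/
def LangDense (S : Set (List A)) : Prop := ∀ v : List A, ∃ u w : List A, u ++ v ++ w ∈ S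

end Birec
namespace Birec

variable {A : Type*}

/-- The characteristic series of a language, as a function `A* → ℚ`. -/
noncomputable def charFun (S : Set (List A)) : List A → ℚ := S.indicator 1

/-- The shift operator `τ ↦ τ · u`, where `(τ · u)(v) = τ(u v)`; this is the linear
action underlying the syntactic representation. -/
def shiftOp (u : List A) : (List A → ℚ) →ₗ[ℚ] (List A → ℚ) where
  toFun τ := fun v => τ (u ++ v)
  map_add' := fun _ _ => rfl
  map_smul' := fun _ _ => rfl

/-- The syntactic space of a series `σ`: the subspace of `ℚ⟨⟨A⟩⟩` spanned by the
series `σ · u` for `u ∈ A*`. -/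
def synSpace (σ : List A → ℚ) : Submodule ℚ (List A → ℚ) :=
  Submodule.span ℚ (Set.range fun u : List A => shiftOp u σ)

/-- A subspace is invariant if it is stable under all shift operators. -/
def InvariantSub (W : Submodule ℚ (List A → ℚ)) : Prop :=
  ∀ τ ∈ W, ∀ u : List A, shiftOp u τ ∈ W

/-- An invariant subspace is irreducible if it is nonzero and has no nontrivial
invariant subspace. -/
def IrreducibleSub (W : Submodule ℚ (List A → ℚ)) : Prop :=
  W ≠ ⊥ ∧ ∀ W' : Submodule ℚ (List A → ℚ), W' ≤ W → InvariantSub W' → W' = ⊥ ∨ W' = W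

/-- A series is completely reducible if its syntactic space is a direct sum of
invariant irreducible subspaces (equivalently, its syntactic representation is a
direct sum of irreducible representations). -/
def CompletelyReducibleSeries (σ : List A → ℚ) : Prop :=
  ∃ (n : ℕ) (W : Fin n → Submodule ℚ (List A → ℚ)),
    (∀ i, W i ≤ synSpace σ ∧ InvariantSub (W i) ∧ IrreducibleSub (W i)) ∧
    iSupIndep W ∧ (⨆ i, W i) = synSpace σ

/-- A language is completely reducible if its characteristic series is. -/
noncomputable def CompletelyReducibleLang (S : Set (List A)) : Prop :=
  CompletelyReducibleSeries (charFun S)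

/-- The rank of the element `ψ_σ(u)` of the syntactic monoid, i.e. the dimension of the
image of the syntactic space under the shift by `u`. -/
noncomputable def psiRank (σ : List A → ℚ) (u : List A) : ℕ :=
  Module.finrank ℚ ↥(Submodule.map (shiftOp u) (synSpace σ))

/-- `u` induces an element of minimal nonzero rank of the syntactic monoid. -/
def IsMinNonzeroPsiRank (σ : List A → ℚ) (u : List A) : Prop :=
  psiRank σ u ≠ 0 ∧ ∀ v : List A, psiRank σ v ≠ 0 → psiRank σ u ≤ psiRank σ v

/-- The eventual kernel `EK(S)`: the intersection (inside the syntactic space) of the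
kernels of all elements of minimal nonzero rank of the syntactic monoid. -/
noncomputable def EK (S : Set (List A)) : Submodule ℚ (List A → ℚ) :=
  synSpace (charFun S) ⊓
    ⨅ u ∈ {u : List A | IsMinNonzeroPsiRank (charFun S) u}, LinearMap.ker (shiftOp u)

/-- The eventual range `ER(S)`: the subspace spanned by the images of all elements of
minimal nonzero rank of the syntactic monoid. -/
noncomputable def ER (S : Set (List A)) : Submodule ℚ (List A → ℚ) :=
  ⨆ u ∈ {u : List A | IsMinNonzeroPsiRank (charFun S) u},
    Submodule.map (shiftOp u) (synSpace (charFun S))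

end Birec

open Birec

/-!
Let `ψ` be the syntactic representation of the characteristic series `σ` of `S`. Recurrence brings
every nonzero `σ · u` back to `σ`, so some `e` of minimal nonzero rank fixes `σ`.

If `ψ` is completely reducible, an invariant complement of the eventual kernel contains
`σ = σ · e`, hence everything. Conversely, suppose that the eventual kernel vanishes. The operators
`e m e` act on the image of `e` as a finite semigroup in which every nonzero element is invertible,
so Maschke's theorem applies to it: the trace on this image of an invariant subspace `U` has a
complement `C` stable under the `e m e`. The subrepresentation `W` generated by `C` satisfies
`W · e ⊆ C`. Hence `e` kills `U ∩ W`, and by recurrence any subrepresentation killed by `e` lies in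
the eventual kernel, so `U ∩ W = 0`; and `σ ∈ U + W`, so `U + W` is the whole space.
-/

namespace Birec

open Module Representation
open scoped MonoidAlgebra

section Maschke

lemma exists_subgroup_toSubmonoid_eq_of_finite {G : Type*} [Group G] (T : Submonoid G)
    (hT : (T : Set G).Finite) : ∃ H : Subgroup G, H.toSubmonoid = T := by
  refine ⟨Subgroup.closure T, ?_⟩
  rw [Subgroup.closure_toSubmonoid_of_isOfFinOrder, Submonoid.closure_eq]
  exact fun x hx => finite_powers.1 (hT.subset (Submonoid.powers_le.2 hx))

variable {k E : Type*} [Field k] [AddCommGroup E] [Module k E]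

lemma exists_isCompl_invariant_of_finite_subgroup (G : Subgroup (End k E)ˣ) [Finite G]
    [NeZero (Nat.card G : k)] {U : Submodule k E} (hU : ∀ g ∈ G, ∀ x ∈ U, (g : End k E) x ∈ U) :
    ∃ C : Submodule k E, IsCompl U C ∧ ∀ g ∈ G, ∀ x ∈ C, (g : End k E) x ∈ C := by
  let ρ : Representation k G E := (Units.coeHom (End k E)).comp G.subtype
  let U' : Subrepresentation ρ := ⟨U, fun g x hx => hU g g.2 x hx⟩
  obtain ⟨C, hC⟩ := exists_isCompl U'
  refine ⟨C.toSubmodule, ?_, fun g hg x hx => C.apply_mem_toSubmodule ⟨g, hg⟩ hx⟩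
  exact ⟨disjoint_iff.2 (congrArg Subrepresentation.toSubmodule hC.inf_eq_bot),
    codisjoint_iff.2 (congrArg Subrepresentation.toSubmodule hC.sup_eq_top)⟩

lemma exists_isCompl_invariant_of_finite_subsemigroup [CharZero k]
    (N : Subsemigroup (End k E)) (hfin : (N : Set (End k E)).Finite)
    (hunit : ∀ g ∈ N, g ≠ 0 → IsUnit g)
    {U : Submodule k E} (hU : ∀ g ∈ N, ∀ x ∈ U, g x ∈ U) :
    ∃ C : Submodule k E, IsCompl U C ∧ ∀ g ∈ N, ∀ x ∈ C, g x ∈ C := by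
  let T : Submonoid (End k E)ˣ :=
    { carrier := {g | g = 1 ∨ (g : End k E) ∈ N}
      one_mem' := .inl rfl
      mul_mem' := by
        rintro g h (rfl | hg) (rfl | hh)
        · exact .inl (one_mul 1)
        · exact .inr (by rwa [one_mul])
        · exact .inr (by rwa [mul_one])
        · exact .inr (N.mul_mem hg hh) }
  have hT : (T : Set (End k E)ˣ).Finite :=
    (Set.finite_singleton 1).union (hfin.preimage Units.val_injective.injOn)
  obtain ⟨G, hG⟩ := exists_subgroup_toSubmonoid_eq_of_finite T hT
  have mem_G (g : (End k E)ˣ) : g ∈ G ↔ g = 1 ∨ (g : End k E) ∈ N := by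
    rw [← Subgroup.mem_toSubmonoid, hG]; rfl
  have : Finite G := (hG ▸ hT : (G.toSubmonoid : Set (End k E)ˣ).Finite)
  have : NeZero (Nat.card G : k) := ⟨Nat.cast_ne_zero.2 Nat.card_pos.ne'⟩
  obtain ⟨C, hUC, hC⟩ := exists_isCompl_invariant_of_finite_subgroup G (U := U) <| by
    intro g hg x hx
    obtain rfl | hg := (mem_G g).1 hg
    exacts [hx, hU g hg x hx]
  refine ⟨C, hUC, fun g hg x hx => ?_⟩
  by_cases h0 : g = 0
  · rw [h0, LinearMap.zero_apply]; exact C.zero_mem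
  · obtain ⟨g, rfl⟩ := hunit g hg h0
    exact hC g ((mem_G g).2 (.inr hg)) x hx

end Maschke

section EventualKernel

variable {k M V : Type*} [Field k] [Monoid M] [AddCommGroup V] [Module k V]

/-- `ρ m` has minimal rank among the nonzero operators of the representation. -/
def IsMinNonzeroRank (ρ : Representation k M V) (m : M) : Prop :=
  ρ m ≠ 0 ∧ ∀ n, ρ n ≠ 0 → finrank k (ρ m).range ≤ finrank k (ρ n).range

variable {ρ : Representation k M V}

lemma exists_isMinNonzeroRank {m : M} (hm : ρ m ≠ 0) : ∃ n, IsMinNonzeroRank ρ n := by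
  obtain ⟨n, hn, hmin⟩ := exists_minimalFor_of_wellFoundedLT (fun n => ρ n ≠ 0)
    (fun n => finrank k (ρ n).range) ⟨m, hm⟩
  exact ⟨n, hn, fun n' hn' => (le_total _ _).elim id (hmin hn')⟩

variable [FiniteDimensional k V] {m : M}

lemma IsMinNonzeroRank.mul_mul_of_ne_zero (hm : IsMinNonzeroRank ρ m) {a b : M}
    (h : ρ (a * m * b) ≠ 0) : IsMinNonzeroRank ρ (a * m * b) := by
  refine ⟨h, fun n hn => le_trans ?_ (hm.2 n hn)⟩
  rw [map_mul, map_mul]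
  calc finrank k (ρ a * ρ m * ρ b).range
      ≤ finrank k (ρ a * ρ m).range := Submodule.finrank_mono (LinearMap.range_comp_le_range _ _)
    _ = finrank k ((ρ m).range.map (ρ a)) := by rw [← LinearMap.range_comp]; rfl
    _ ≤ finrank k (ρ m).range := Submodule.finrank_map_le _ _

lemma IsMinNonzeroRank.ker_mul_eq (hm : IsMinNonzeroRank ρ m) {n : M} (h : ρ (n * m) ≠ 0) :
    (ρ (n * m)).ker = (ρ m).ker := by
  have hle : (ρ m).ker ≤ (ρ (n * m)).ker := by
    rw [map_mul]; exact LinearMap.ker_le_ker_comp _ _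
  refine (Submodule.eq_of_le_of_finrank_le hle ?_).symm
  have := (ρ m).finrank_range_add_finrank_ker
  have := (ρ (n * m)).finrank_range_add_finrank_ker
  have := hm.2 _ h
  lia

/-- The intersection of the kernels of the operators of minimal nonzero rank. -/
def eventualKernel (ρ : Representation k M V) : Subrepresentation ρ where
  toSubmodule := ⨅ m, ⨅ _ : IsMinNonzeroRank ρ m, (ρ m).ker
  apply_mem_toSubmodule n x hx := by
    simp only [Submodule.mem_iInf, LinearMap.mem_ker] at hx ⊢
    intro m hm
    rw [← Module.End.mul_apply, ← map_mul]
    by_cases h : ρ (m * n) = 0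
    · rw [h, LinearMap.zero_apply]
    · have := hm.mul_mul_of_ne_zero (a := 1) (b := n) (by rwa [one_mul])
      exact hx _ (one_mul m ▸ this)

lemma mem_eventualKernel {x : V} :
    x ∈ eventualKernel ρ ↔ ∀ m, IsMinNonzeroRank ρ m → ρ m x = 0 := by
  change x ∈ (eventualKernel ρ).toSubmodule ↔ _
  simp only [eventualKernel, Submodule.mem_iInf, LinearMap.mem_ker]

end EventualKernel

section LocalComplement

variable {k M V : Type*} [Field k] [Monoid M] [AddCommGroup V] [Module k V]
  {ρ : Representation k M V} {e : M}

/-- The operator induced by `ρ (e * m)` on the image of `ρ e`. -/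
noncomputable def localOp (ρ : Representation k M V) (e m : M) : End k (ρ e).range :=
  (ρ e).rangeRestrict ∘ₗ ρ m ∘ₗ (ρ e).range.subtype

lemma coe_localOp_apply (m : M) (x : (ρ e).range) : (localOp ρ e m x : V) = ρ (e * m) x := by
  simp [localOp]

lemma localOp_mul (m n : M) : localOp ρ e m * localOp ρ e n = localOp ρ e (m * e * n) := by
  ext x
  simp [localOp]

/-- The semigroup of all operators induced on the image of `ρ e`. -/
noncomputable def localSemigroup (ρ : Representation k M V) (e : M) :
    Subsemigroup (End k (ρ e).range) where
  carrier := Set.range (localOp ρ e)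
  mul_mem' := by
    rintro _ _ ⟨m, rfl⟩ ⟨n, rfl⟩
    exact ⟨_, (localOp_mul m n).symm⟩

lemma finite_localSemigroup (hfin : (Set.range ρ).Finite) (e : M) :
    (localSemigroup ρ e : Set (End k (ρ e).range)).Finite := by
  refine (hfin.image fun f => (ρ e).rangeRestrict ∘ₗ f ∘ₗ (ρ e).range.subtype).subset ?_
  rintro _ ⟨m, rfl⟩
  exact ⟨ρ m, ⟨m, rfl⟩, rfl⟩

lemma IsMinNonzeroRank.isUnit_localOp [FiniteDimensional k V] (he : IsMinNonzeroRank ρ e) {m : M}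
    (hm : localOp ρ e m ≠ 0) : IsUnit (localOp ρ e m) := by
  rw [LinearMap.isUnit_iff_ker_eq_bot, LinearMap.ker_eq_bot']
  rintro ⟨_, x, rfl⟩ hx
  have hne : ρ (e * m * e) ≠ 0 := by
    refine fun h0 => hm (LinearMap.ext ?_)
    rintro ⟨_, y, rfl⟩
    exact Subtype.ext ((coe_localOp_apply m _).trans (by simpa using LinearMap.congr_fun h0 y))
  have hx' : x ∈ (ρ (e * m * e)).ker := by
    simpa [coe_localOp_apply] using congrArg Subtype.val hx
  rw [he.ker_mul_eq hne] at hx'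
  exact Subtype.ext hx'

lemma IsMinNonzeroRank.exists_local_complement [CharZero k] [FiniteDimensional k V]
    (he : IsMinNonzeroRank ρ e) (hfin : (Set.range ρ).Finite) (U : Subrepresentation ρ) :
    ∃ C : Submodule k V, Disjoint U.toSubmodule C ∧ (ρ e).range ≤ U.toSubmodule ⊔ C ∧
      ∀ m, ∀ c ∈ C, ρ (e * m) c ∈ C := by
  obtain ⟨C, hUC, hC⟩ := exists_isCompl_invariant_of_finite_subsemigroup
    (localSemigroup ρ e) (finite_localSemigroup hfin e)
    (by rintro _ ⟨m, rfl⟩ h; exact he.isUnit_localOp h)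
    (U := U.toSubmodule.comap (ρ e).range.subtype)
    (by
      rintro _ ⟨m, rfl⟩ x hx
      rw [Submodule.mem_comap, Submodule.subtype_apply, coe_localOp_apply]
      exact U.apply_mem_toSubmodule _ hx)
  refine ⟨C.map (ρ e).range.subtype, ?_, ?_, ?_⟩
  · rw [Submodule.disjoint_def]
    rintro _ hU ⟨c, hc, rfl⟩
    exact congrArg Subtype.val (Submodule.disjoint_def.1 hUC.disjoint c hU hc)
  · calc (ρ e).range
        = (U.toSubmodule.comap (ρ e).range.subtype ⊔ C).map (ρ e).range.subtype := by
          rw [hUC.sup_eq_top, Submodule.map_subtype_top]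
      _ ≤ U.toSubmodule ⊔ C.map (ρ e).range.subtype := by
          rw [Submodule.map_sup]
          exact sup_le_sup_right (Submodule.map_comap_le _ _) _
  · rintro m _ ⟨c, hc, rfl⟩
    exact ⟨localOp ρ e m c, hC _ ⟨m, rfl⟩ c hc, coe_localOp_apply m c⟩

end LocalComplement

section RecurrentVector

variable {k M V : Type*} [Field k] [Monoid M] [AddCommGroup V] [Module k V]

/-- The subrepresentation generated by a subspace `C`. -/
def spanSubrep (ρ : Representation k M V) (C : Submodule k V) : Subrepresentation ρ where
  toSubmodule := ⨆ m, C.map (ρ m)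
  apply_mem_toSubmodule n x hx := by
    have : ⨆ m, C.map (ρ m) ≤ (⨆ m, C.map (ρ m)).comap (ρ n) := by
      refine iSup_le fun m => ?_
      rw [← Submodule.map_le_iff_le_comap, ← Submodule.map_comp]
      exact (map_mul ρ n m ▸ le_iSup (fun m => C.map (ρ m)) (n * m) :)
    exact this hx

lemma le_spanSubrep (ρ : Representation k M V) (C : Submodule k V) :
    C ≤ (spanSubrep ρ C).toSubmodule :=
  fun c hc => Submodule.mem_iSup_of_mem 1 ⟨c, hc, by simp⟩

/-- A vector `σ` whose orbit spans the representation. -/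
structure IsCyclicVector (ρ : Representation k M V) (σ : V) : Prop where
  span_orbit_eq_top : Submodule.span k (Set.range fun m => ρ m σ) = ⊤

/-- A cyclic vector `σ` to which every nonzero vector of its orbit can be brought back: the
linear counterpart of a strongly connected automaton with initial state `σ`. -/
structure IsRecurrentVector (ρ : Representation k M V) (σ : V) : Prop
    extends IsCyclicVector ρ σ where
  exists_mul_apply_eq : ∀ m, ρ m σ ≠ 0 → ∃ n, ρ (n * m) σ = σ

variable {ρ : Representation k M V} {σ : V}

namespace IsCyclicVector

lemma subrepresentation_eq_top (hσ : IsCyclicVector ρ σ) {W : Subrepresentation ρ}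
    (hW : σ ∈ W) : W = ⊤ := by
  refine top_le_iff.1 (show (⊤ : Submodule k V) ≤ W.toSubmodule from ?_)
  rw [← hσ.span_orbit_eq_top, Submodule.span_le]
  rintro _ ⟨m, rfl⟩
  exact W.apply_mem_toSubmodule m hW

lemma exists_apply_ne_zero (hσ : IsCyclicVector ρ σ) {m : M} (hm : ρ m ≠ 0) :
    ∃ a, ρ (m * a) σ ≠ 0 := by
  contrapose! hm
  refine LinearMap.ext_on_range hσ.span_orbit_eq_top fun a => ?_
  simpa using hm a

lemma finiteDimensional (hσ : IsCyclicVector ρ σ) (hfin : (Set.range fun m => ρ m σ).Finite) :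
    FiniteDimensional k V :=
  .of_fg_top (hσ.span_orbit_eq_top ▸ Submodule.fg_span hfin)

lemma finite_range (hσ : IsCyclicVector ρ σ) (hfin : (Set.range fun m => ρ m σ).Finite) :
    (Set.range ρ).Finite := by
  have := hfin.to_subtype
  refine .of_finite_image (f := fun f (x : Set.range fun m => ρ m σ) => f x)
    ((Set.Finite.pi' fun _ => hfin).subset ?_) ?_
  · rintro _ ⟨_, ⟨m, rfl⟩, rfl⟩ ⟨_, n, rfl⟩
    exact ⟨m * n, by simp⟩
  · exact fun f _ g _ hfg =>
      LinearMap.ext_on hσ.span_orbit_eq_top fun x hx => congrFun hfg ⟨x, hx⟩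

lemma eventualKernel_eq_bot [FiniteDimensional k V] [IsSemisimpleRepresentation ρ]
    (hσ : IsCyclicVector ρ σ) {e : M} (he : IsMinNonzeroRank ρ e) (heσ : ρ e σ = σ) :
    eventualKernel ρ = ⊥ := by
  obtain ⟨W, hW⟩ := exists_isCompl (eventualKernel ρ)
  suffices hσW : σ ∈ W by
    simpa [hσ.subrepresentation_eq_top hσW] using hW.inf_eq_bot
  obtain ⟨x, hx, w, hw, rfl⟩ : ∃ x ∈ eventualKernel ρ, ∃ w ∈ W, x + w = σ :=
    Submodule.mem_sup.1 (show σ ∈ eventualKernel ρ ⊔ W from hW.sup_eq_top ▸ Submodule.mem_top)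
  rw [map_add, mem_eventualKernel.1 hx e he, zero_add] at heσ
  exact heσ ▸ W.apply_mem_toSubmodule e hw

end IsCyclicVector

namespace IsRecurrentVector

lemma exists_isMinNonzeroRank_apply_eq [FiniteDimensional k V] (hσ : IsRecurrentVector ρ σ)
    (h0 : σ ≠ 0) : ∃ e, IsMinNonzeroRank ρ e ∧ ρ e σ = σ := by
  have h1 : ρ 1 ≠ 0 := fun h => h0 (by simpa using LinearMap.congr_fun h σ)
  obtain ⟨m, hm⟩ := exists_isMinNonzeroRank h1
  obtain ⟨a, ha⟩ := hσ.exists_apply_ne_zero hm.1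
  obtain ⟨n, hn⟩ := hσ.exists_mul_apply_eq _ ha
  rw [← mul_assoc] at hn
  refine ⟨n * m * a, hm.mul_mul_of_ne_zero fun h => h0 ?_, hn⟩
  rw [← hn, h, LinearMap.zero_apply]

-- With `b` bringing `ρ (v * a) σ` back to `σ`, the operator of `v * a * e * b * v` does not kill
-- `ρ a σ`, so it has the same kernel as that of `v`; and it kills `X` since it passes through `e`.
lemma le_eventualKernel [FiniteDimensional k V] (hσ : IsRecurrentVector ρ σ) {e : M}
    (heσ : ρ e σ = σ) {X : Subrepresentation ρ} (hX : ∀ x ∈ X, ρ e x = 0) :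
    X ≤ eventualKernel ρ := by
  intro x hx
  refine mem_eventualKernel.2 fun v hv => ?_
  obtain ⟨a, ha⟩ := hσ.exists_apply_ne_zero hv.1
  obtain ⟨b, hb⟩ := hσ.exists_mul_apply_eq _ ha
  have hfix : ρ (v * a * e * b * v) (ρ a σ) = ρ (v * a) σ := by
    simp only [map_mul, Module.End.mul_apply] at hb ⊢
    rw [hb, heσ]
  have hne : ρ (v * a * e * b * v) ≠ 0 := fun h => ha (by rw [← hfix, h, LinearMap.zero_apply])
  have hker : x ∈ (ρ (v * a * e * b * v)).ker := by
    have : ρ e (ρ (b * v) x) = 0 := hX _ (X.apply_mem_toSubmodule _ hx)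
    rw [LinearMap.mem_ker, mul_assoc, map_mul, Module.End.mul_apply, map_mul, Module.End.mul_apply,
      this, map_zero]
  rwa [hv.ker_mul_eq hne] at hker

lemma isSemisimpleRepresentation [CharZero k] [FiniteDimensional k V] (hσ : IsRecurrentVector ρ σ)
    (hfin : (Set.range ρ).Finite) {e : M} (he : IsMinNonzeroRank ρ e) (heσ : ρ e σ = σ)
    (hbot : eventualKernel ρ = ⊥) : IsSemisimpleRepresentation ρ := by
  refine ⟨fun U => ?_⟩
  obtain ⟨C, hUC, hle, hC⟩ := he.exists_local_complement hfin U
  refine ⟨spanSubrep ρ C, disjoint_iff_inf_le.2 ?_, codisjoint_iff.2 ?_⟩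
  · rw [← hbot]
    refine hσ.le_eventualKernel heσ fun x hx => ?_
    have hspan : (spanSubrep ρ C).toSubmodule ≤ C.comap (ρ e) := by
      refine iSup_le fun m => Submodule.map_le_iff_le_comap.2 fun c hc => ?_
      simpa using hC m c hc
    exact Submodule.disjoint_def.1 hUC _ (U.apply_mem_toSubmodule e hx.1) (hspan hx.2)
  · refine hσ.subrepresentation_eq_top ?_
    exact (hle.trans (sup_le_sup_left (le_spanSubrep ρ C) _)) ⟨σ, heσ⟩

theorem isSemisimpleRepresentation_iff [CharZero k] [FiniteDimensional k V]
    (hσ : IsRecurrentVector ρ σ) (hfin : (Set.range ρ).Finite) :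
    IsSemisimpleRepresentation ρ ↔ eventualKernel ρ = ⊥ := by
  by_cases h0 : σ = 0
  · have : Subsingleton (Subrepresentation ρ) := subsingleton_of_bot_eq_top <|
      hσ.subrepresentation_eq_top (h0 ▸ Submodule.zero_mem _)
    have : IsSemisimpleRepresentation ρ := ⟨fun U => ⟨⊤, Subsingleton.elim ⊥ U ▸ isCompl_bot_top⟩⟩
    exact iff_of_true this (Subsingleton.elim _ _)
  · obtain ⟨e, he, heσ⟩ := hσ.exists_isMinNonzeroRank_apply_eq h0
    exact ⟨fun _ => hσ.eventualKernel_eq_bot he heσ, hσ.isSemisimpleRepresentation hfin he heσ⟩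

end IsRecurrentVector

end RecurrentVector

section Decomposition

lemma iSupIndep_completeLatticeHom_iff {ι α β : Type*} [CompleteLattice α] [CompleteLattice β]
    {f : CompleteLatticeHom α β} (hf : Function.Injective f) {t : ι → α} :
    iSupIndep (fun i => f (t i)) ↔ iSupIndep t := by
  simp only [iSupIndep_def, disjoint_iff, ← map_iSup, ← map_inf, ← map_bot f, hf.eq_iff]

lemma isSemisimpleModule_iff_exists_iSupIndep {R X : Type*} [Ring R] [AddCommGroup X] [Module R X]
    (N : Submodule R X) [IsNoetherian R N] :
    IsSemisimpleModule R N ↔ ∃ (n : ℕ) (W : Fin n → Submodule R X),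
      (∀ i, IsAtom (W i)) ∧ iSupIndep W ∧ ⨆ i, W i = N := by
  constructor
  · intro _
    obtain ⟨s, hind, hsup, hsimple⟩ := IsSemisimpleModule.exists_sSupIndep_sSup_simples_eq_top R N
    have : Finite s := WellFoundedGT.finite_of_sSupIndep hind
    let e := (Finite.equivFin s).symm
    refine ⟨_, fun i => (e i : Submodule R N).map N.subtype, fun i => ?_, ?_, ?_⟩
    · have := hsimple _ (e i).2
      exact isSimpleModule_iff_isAtom.1 (.congr (Submodule.equivMapOfInjective _
        N.subtype_injective _).symm)
    · exact LinearMap.iSupIndep_map _ N.subtype_injective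
        (((sSupIndep_iff s).1 hind).comp e.injective)
    · rw [← Submodule.map_iSup, e.iSup_comp (g := fun x : s => (x : Submodule R N)),
        ← sSup_eq_iSup', hsup, Submodule.map_subtype_top]
  · rintro ⟨n, W, hW, -, rfl⟩
    have (i) (_ : i ∈ Set.univ) : IsSemisimpleModule R (W i) :=
      have := isSimpleModule_iff_isAtom.2 (hW i)
      inferInstance
    exact iSup_univ (f := W) ▸ isSemisimpleModule_biSup_of_isSemisimpleModule_submodule this

variable {k M V : Type*} [Field k] [Monoid M] [AddCommGroup V] [Module k V]
  {ρ : Representation k M V}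

/-- Subrepresentations of `P` are the subrepresentations of `ρ` contained in `P`. -/
def subrepresentationOrderIsoIic (P : Subrepresentation ρ) :
    Subrepresentation P.toRepresentation ≃o Set.Iic P where
  toFun Q := ⟨⟨Q.toSubmodule.map P.toSubmodule.subtype, by
    rintro m _ ⟨x, hx, rfl⟩
    exact ⟨_, Q.apply_mem_toSubmodule m hx, rfl⟩⟩, Submodule.map_subtype_le _ _⟩
  invFun Q := ⟨Q.1.toSubmodule.comap P.toSubmodule.subtype,
    fun m _ hx => Q.1.apply_mem_toSubmodule m hx⟩
  left_inv Q := Subrepresentation.ext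
    (Submodule.comap_map_eq_of_injective P.toSubmodule.subtype_injective _)
  right_inv Q := Subtype.ext <| Subrepresentation.ext <|
    (Submodule.map_comap_subtype _ _).trans (inf_eq_right.2 Q.2)
  map_rel_iff' := Submodule.map_le_map_iff_of_injective P.toSubmodule.subtype_injective _ _

lemma isSemisimpleRepresentation_toRepresentation_iff (P : Subrepresentation ρ) :
    IsSemisimpleRepresentation P.toRepresentation ↔ IsSemisimpleModule k[M] P.asSubmodule := by
  rw [isSemisimpleModule_iff]
  refine OrderIso.complementedLattice_iff ((subrepresentationOrderIsoIic P).trans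
    ((Subrepresentation.subrepresentationSubmoduleOrderIso.Iic P).trans
      (Submodule.mapIic P.asSubmodule).symm))

lemma isSemisimpleRepresentation_toRepresentation_iff_exists_iSupIndep (P : Subrepresentation ρ)
    [FiniteDimensional k P.toSubmodule] :
    IsSemisimpleRepresentation P.toRepresentation ↔
      ∃ (n : ℕ) (W : Fin n → Subrepresentation ρ), (∀ i, IsAtom (W i)) ∧
        iSupIndep (fun i => (W i).toSubmodule) ∧ ⨆ i, (W i).toSubmodule = P.toSubmodule := by
  let f := Submodule.restrictScalarsLatticeHom k k[M] ρ.asModule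
  let e := Subrepresentation.subrepresentationSubmoduleOrderIso (ρ := ρ)
  have hf : Function.Injective f := Submodule.restrictScalars_injective k k[M] ρ.asModule
  have : IsNoetherian k[M] P.asSubmodule := isNoetherian_of_tower k
    (inferInstanceAs (IsNoetherian k P.toSubmodule))
  rw [isSemisimpleRepresentation_toRepresentation_iff, isSemisimpleModule_iff_exists_iSupIndep]
  have key (n : ℕ) (W : Fin n → Subrepresentation ρ) :
      (∀ i, IsAtom (e (W i))) ∧ iSupIndep (fun i => e (W i)) ∧ ⨆ i, e (W i) = e P ↔
        (∀ i, IsAtom (W i)) ∧ iSupIndep (fun i => (W i).toSubmodule) ∧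
          ⨆ i, (W i).toSubmodule = P.toSubmodule := by
    simp only [e.isAtom_iff, ← iSupIndep_completeLatticeHom_iff hf,
      ← hf.eq_iff (a := iSup _), map_iSup]
    rfl
  simp only [← key]
  exact exists_congr fun n => e.surjective.comp_left.exists

end Decomposition

section SyntacticRepresentation

variable {A : Type*}

/-- The action of words on series by shifts, as a representation. Since `τ · (uv) = (τ · u) · v`
is a right action, the acting monoid is the opposite of the free monoid. -/
def shiftRep (A : Type*) : Representation ℚ (FreeMonoid A)ᵐᵒᵖ (List A → ℚ) where
  toFun m := shiftOp m.unop.toList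
  map_one' := rfl
  map_mul' m n := by
    ext τ v
    exact congrArg τ (List.append_assoc _ _ _)

lemma invariantSub_iff_exists_subrepresentation {W : Submodule ℚ (List A → ℚ)} :
    InvariantSub W ↔ ∃ Q : Subrepresentation (shiftRep A), Q.toSubmodule = W := by
  constructor
  · exact fun hW => ⟨⟨W, fun m τ hτ => hW τ hτ m.unop.toList⟩, rfl⟩
  · rintro ⟨Q, rfl⟩ τ hτ u
    exact Q.apply_mem_toSubmodule (.op (.ofList u)) hτ

lemma irreducibleSub_iff_isAtom {Q : Subrepresentation (shiftRep A)} :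
    IrreducibleSub Q.toSubmodule ↔ IsAtom Q := by
  have bot_iff {P : Subrepresentation (shiftRep A)} : P.toSubmodule = ⊥ ↔ P = ⊥ :=
    Subrepresentation.toSubmodule_injective.eq_iff (b := ⊥)
  constructor
  · rintro ⟨h0, hmin⟩
    refine ⟨mt bot_iff.2 h0, fun P hP => ?_⟩
    have := hmin P.toSubmodule hP.le (invariantSub_iff_exists_subrepresentation.2 ⟨P, rfl⟩)
    exact bot_iff.1 <| this.resolve_right fun h => hP.ne (Subrepresentation.ext h)
  · refine fun hQ => ⟨mt bot_iff.1 hQ.ne_bot, fun W hW hinv => ?_⟩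
    obtain ⟨P, rfl⟩ := invariantSub_iff_exists_subrepresentation.1 hinv
    exact (hQ.le_iff.1 (show P ≤ Q from hW)).imp bot_iff.2 (congrArg _)

/-- The syntactic space of `σ`, as a subrepresentation of the shift representation. -/
def synSubrep (σ : List A → ℚ) : Subrepresentation (shiftRep A) where
  toSubmodule := synSpace σ
  apply_mem_toSubmodule m := by
    change synSpace σ ≤ (synSpace σ).comap (shiftRep A m)
    refine Submodule.span_le.2 ?_
    rintro _ ⟨u, rfl⟩
    refine Submodule.subset_span ⟨u ++ m.unop.toList, ?_⟩
    exact LinearMap.congr_fun (map_mul (shiftRep A) m (.op (.ofList u))) σ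

/-- The syntactic representation `ψ_σ`. -/
abbrev synRep (σ : List A → ℚ) : Representation ℚ (FreeMonoid A)ᵐᵒᵖ (synSubrep σ).toSubmodule :=
  (synSubrep σ).toRepresentation

variable {σ : List A → ℚ}

lemma psiRank_eq_finrank_range (u : List A) :
    psiRank σ u = finrank ℚ (synRep σ (.op (.ofList u))).range := by
  rw [psiRank, ← LinearMap.range_domRestrict, ← Submodule.finrank_map_subtype_eq,
    ← LinearMap.range_comp]
  rfl

variable [FiniteDimensional ℚ (synSubrep σ).toSubmodule]

lemma completelyReducibleSeries_iff_isSemisimpleRepresentation :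
    CompletelyReducibleSeries σ ↔ IsSemisimpleRepresentation (synRep σ) := by
  rw [synRep, isSemisimpleRepresentation_toRepresentation_iff_exists_iSupIndep]
  refine exists_congr fun n => ⟨?_, ?_⟩
  · rintro ⟨W, hW, hind, hsup⟩
    choose Q hQ using fun i => invariantSub_iff_exists_subrepresentation.1 (hW i).2.1
    obtain rfl : (fun i => (Q i).toSubmodule) = W := funext hQ
    exact ⟨Q, fun i => irreducibleSub_iff_isAtom.1 (hW i).2.2, hind, hsup⟩
  · rintro ⟨Q, hQ, hind, hsup⟩
    refine ⟨fun i => (Q i).toSubmodule, fun i => ⟨?_, ?_, irreducibleSub_iff_isAtom.2 (hQ i)⟩,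
      hind, hsup⟩
    · exact (le_iSup (fun i => (Q i).toSubmodule) i).trans hsup.le
    · exact invariantSub_iff_exists_subrepresentation.2 ⟨Q i, rfl⟩

lemma isMinNonzeroPsiRank_iff {u : List A} :
    IsMinNonzeroPsiRank σ u ↔ IsMinNonzeroRank (synRep σ) (.op (.ofList u)) := by
  have ne_zero_iff (f : End ℚ (synSubrep σ).toSubmodule) : finrank ℚ f.range ≠ 0 ↔ f ≠ 0 := by
    rw [Ne, Submodule.finrank_eq_zero, LinearMap.range_eq_bot]
  simp only [IsMinNonzeroPsiRank, IsMinNonzeroRank, psiRank_eq_finrank_range, ne_zero_iff,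
    MulOpposite.op_surjective.forall, FreeMonoid.ofList.surjective.forall]

lemma EK_eq_map_eventualKernel {S : Set (List A)}
    [FiniteDimensional ℚ (synSubrep (charFun S)).toSubmodule] :
    EK S = (eventualKernel (synRep (charFun S))).toSubmodule.map
      (synSubrep (charFun S)).toSubmodule.subtype := by
  ext τ
  have mem_iff (hτ : τ ∈ synSpace (charFun S)) :
      (⟨τ, hτ⟩ : (synSubrep (charFun S)).toSubmodule) ∈ eventualKernel (synRep (charFun S)) ↔
        ∀ u, IsMinNonzeroPsiRank (charFun S) u → shiftOp u τ = 0 := by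
    simp only [mem_eventualKernel, isMinNonzeroPsiRank_iff, MulOpposite.op_surjective.forall,
      FreeMonoid.ofList.surjective.forall, Subtype.ext_iff]
    rfl
  have mem_EK : τ ∈ EK S ↔ τ ∈ synSpace (charFun S) ∧
      ∀ u, IsMinNonzeroPsiRank (charFun S) u → shiftOp u τ = 0 := by
    simp only [EK, Submodule.mem_inf, Submodule.mem_iInf, Set.mem_ofPred_eq, LinearMap.mem_ker]
  rw [mem_EK]
  constructor
  · rintro ⟨hτ, hker⟩
    exact ⟨⟨τ, hτ⟩, (mem_iff hτ).2 hker, rfl⟩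
  · rintro ⟨⟨τ, hτ⟩, hker, rfl⟩
    exact ⟨hτ, (mem_iff hτ).1 hker⟩

lemma EK_eq_bot_iff {S : Set (List A)} [FiniteDimensional ℚ (synSubrep (charFun S)).toSubmodule] :
    EK S = ⊥ ↔ eventualKernel (synRep (charFun S)) = ⊥ := by
  rw [EK_eq_map_eventualKernel,
    (Submodule.map_injective_of_injective (Submodule.subtype_injective _)).eq_iff'
      (Submodule.map_bot _)]
  exact Subrepresentation.toSubmodule_injective.eq_iff (b := ⊥)

end SyntacticRepresentation

section Recurrent

variable {A : Type*} {S : Set (List A)}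

/-- The characteristic series, as a vector of its own syntactic representation. -/
noncomputable def charVec (S : Set (List A)) : (synSubrep (charFun S)).toSubmodule :=
  ⟨charFun S, Submodule.subset_span ⟨[], rfl⟩⟩

lemma coe_synRep_charVec (m : (FreeMonoid A)ᵐᵒᵖ) :
    (synRep (charFun S) m (charVec S) : List A → ℚ) = charFun (leftQuot S m.unop.toList) := rfl

lemma charFun_ne_zero_iff : charFun S ≠ 0 ↔ S.Nonempty := by
  rw [charFun, Ne, Set.indicator_eq_zero', Function.support_one,
    Set.not_disjoint_iff_nonempty_inter, Set.univ_inter]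

lemma Recurrent.isRecurrentVector (hS : Recurrent S) :
    IsRecurrentVector (synRep (charFun S)) (charVec S) where
  span_orbit_eq_top := by
    have : (Set.range fun m => synRep (charFun S) m (charVec S)) =
        Subtype.val ⁻¹' Set.range fun u => shiftOp u (charFun S) := by
      ext τ
      simp only [Set.mem_range, Set.mem_preimage, Subtype.ext_iff]
      exact MulOpposite.op_surjective.exists.trans FreeMonoid.ofList.surjective.exists
    rw [this]
    exact Submodule.span_span_coe_preimage
  exists_mul_apply_eq m hm := by
    have hne : (leftQuot S m.unop.toList).Nonempty := by
      rw [← charFun_ne_zero_iff, ← coe_synRep_charVec]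
      exact fun h => hm (Subtype.ext h)
    have hS' : (leftQuot S []).Nonempty := hne.elim fun v hv => ⟨_ ++ v, hv⟩
    obtain ⟨w, hw⟩ := hS.2 _ [] hne hS'
    exact ⟨.op (.ofList w), Subtype.ext (congrArg charFun hw)⟩

lemma Recognizable.finite_range_synRep_charVec (hS : Recognizable S) :
    (Set.range fun m => synRep (charFun S) m (charVec S)).Finite := by
  refine .of_finite_image ((hS.image charFun).subset ?_) Subtype.val_injective.injOn
  rintro _ ⟨_, ⟨m, rfl⟩, rfl⟩
  exact ⟨_, ⟨_, rfl⟩, rfl⟩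

end Recurrent

end Birec

theorem completelyReducible_iff_ek_eq_bot_general {A : Type*} {S : Set (List A)}
    (hS : Recurrent S) :
    CompletelyReducibleLang S ↔ EK S = ⊥ := by
  have hσ := hS.isRecurrentVector
  have hfin := hS.1.finite_range_synRep_charVec
  have := hσ.finiteDimensional hfin
  rw [CompletelyReducibleLang, completelyReducibleSeries_iff_isSemisimpleRepresentation,
    EK_eq_bot_iff, hσ.isSemisimpleRepresentation_iff (hσ.finite_range hfin)]

/-- **Theorem.** A recurrent set `S` is completely reducible over `ℚ` if and only if
its eventual kernel is trivial: `EK(S) = {0}`. -/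
theorem completelyReducible_iff_ek_eq_bot {A : Type*} [Fintype A] (S : Set (List A))
    (hS : Recurrent S) :
    CompletelyReducibleLang S ↔ EK S = ⊥ :=
  completelyReducible_iff_ek_eq_bot_general hS
end

section
/- Let S be a recurrent completely reducible set, let σ = 𝟙_S and ψ = ψ_σ its syntactic representation. Then the number of irreducible constituents of ψ is equal to the number of irreducible constituents of the restriction of ψ to the Suschkevitch group of the finite monoid ψ(A*). -/
open Birec

/-!
Let `e = ψ(x)`.  If `W` is an irreducible invariant subspace then `We` is zero or irreducible under
`eψ(A*)e`: an invariant `U ⊆ We` generates under `ψ(A*)` either `0` or `W`, and cutting the result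
down by `e` returns `U`.  When `S` is recurrent, `V_σ e` generates `V_σ`, so it lies in no proper
invariant subspace and no summand of `V_σ` is killed by `e`.  Hence `W ↦ We` turns a decomposition
of `V_σ` into a decomposition of `V_σ e` with the same number of summands, and that number is the
length of `V_σ e` as a module over the algebra generated by `eψ(A*)e`.
-/

namespace Birec

section Decomposition

variable {K M α ι : Type*} [Semiring K] [AddCommMonoid M] [Module K M]
  {ρ : α → Module.End K M} {V W : Submodule K M} {P : ι → Submodule K M} {x : α}

/-- Invariance of a submodule under a family of operators, which need not be closed under
composition; for the family `shiftOp` this unfolds to `InvariantSub`. -/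
def IsInvariantUnder (ρ : α → Module.End K M) (W : Submodule K M) : Prop :=
  ∀ v ∈ W, ∀ a, ρ a v ∈ W

/-- Irreducibility of a submodule under a family of operators.  Invariance of the submodule itself
is not part of the definition; for the family `shiftOp` this unfolds to `IrreducibleSub`. -/
def IsIrreducibleUnder (ρ : α → Module.End K M) (W : Submodule K M) : Prop :=
  W ≠ ⊥ ∧ ∀ W' : Submodule K M, W' ≤ W → IsInvariantUnder ρ W' → W' = ⊥ ∨ W' = W

/-- A decomposition of `V` as an internal direct sum of submodules `P i` invariant and irreducible
under a family of operators. -/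
structure IsIrreducibleDecomposition (ρ : α → Module.End K M) (V : Submodule K M)
    (P : ι → Submodule K M) : Prop where
  invariant : ∀ i, IsInvariantUnder ρ (P i)
  irreducible : ∀ i, IsIrreducibleUnder ρ (P i)
  indep : iSupIndep P
  iSup_eq : ⨆ i, P i = V

/-- The family `a ↦ e ρ(a) e`, where `e = ρ(x)`.  When `e` is idempotent these operators span a
corner algebra, acting on the image of `e`. -/
def corner (ρ : α → Module.End K M) (x : α) : α → Module.End K M :=
  fun a => ρ x * ρ a * ρ x

theorem IsInvariantUnder.map_le (hW : IsInvariantUnder ρ W) (a : α) : W.map (ρ a) ≤ W :=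
  Submodule.map_le_iff_le_comap.2 fun v hv => hW v hv a

theorem IsInvariantUnder.iSup {ι : Sort*} {P : ι → Submodule K M}
    (hP : ∀ i, IsInvariantUnder ρ (P i)) : IsInvariantUnder ρ (⨆ i, P i) := by
  intro v hv a
  have hle : ⨆ i, P i ≤ (⨆ i, P i).comap (ρ a) :=
    iSup_le fun i v hv => Submodule.mem_iSup_of_mem i (hP i v hv a)
  exact hle hv

theorem isInvariantUnder_iSup_map (hmul : ∀ a b, ρ a * ρ b ∈ Set.range ρ) (U : Submodule K M) :
    IsInvariantUnder ρ (⨆ a, U.map (ρ a)) := by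
  intro v hv b
  have hle : ⨆ a, U.map (ρ a) ≤ (⨆ a, U.map (ρ a)).comap (ρ b) := by
    refine iSup_le fun a => ?_
    rintro _ ⟨v, hv, rfl⟩
    obtain ⟨c, hc⟩ := hmul b a
    exact Submodule.mem_iSup_of_mem c ⟨v, hv, by rw [hc, Module.End.mul_apply]⟩
  exact hle hv

theorem IsInvariantUnder.corner (hW : IsInvariantUnder ρ W) (x : α) :
    IsInvariantUnder (corner ρ x) (W.map (ρ x)) := fun v hv a =>
  Submodule.mem_map_of_mem (hW _ (hW v (hW.map_le x hv) x) a)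

theorem IsIrreducibleUnder.corner (hone : 1 ∈ Set.range ρ)
    (hmul : ∀ a b, ρ a * ρ b ∈ Set.range ρ) (hW : IsInvariantUnder ρ W)
    (hirr : IsIrreducibleUnder ρ W) (hidem : ∀ v ∈ W, ρ x (ρ x v) = ρ x v)
    (hne : W.map (ρ x) ≠ ⊥) : IsIrreducibleUnder (corner ρ x) (W.map (ρ x)) := by
  refine ⟨hne, fun U hUW hU => ?_⟩
  have hU_le_orbit : U ≤ ⨆ a, U.map (ρ a) := by
    obtain ⟨a, ha⟩ := hone
    exact le_iSup_of_le a (by rw [ha, Module.End.one_eq_id, Submodule.map_id])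
  have horbit_le_W : ⨆ a, U.map (ρ a) ≤ W :=
    iSup_le fun a => (Submodule.map_mono (hUW.trans (hW.map_le x))).trans (hW.map_le a)
  have hfix : ∀ v ∈ U, ρ x v = v := fun v hv => by
    obtain ⟨w, hw, rfl⟩ := hUW hv
    exact hidem w hw
  have hmap_orbit_le_U : (⨆ a, U.map (ρ a)).map (ρ x) ≤ U := by
    rw [Submodule.map_iSup]
    refine iSup_le fun a => ?_
    rintro _ ⟨_, ⟨v, hv, rfl⟩, rfl⟩
    simpa only [Birec.corner, Module.End.mul_apply, hfix v hv] using hU v hv a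
  refine (hirr.2 _ horbit_le_W (isInvariantUnder_iSup_map hmul U)).imp
    (fun horbit => le_bot_iff.1 (hU_le_orbit.trans_eq horbit))
    fun horbit => le_antisymm hUW ?_
  rwa [horbit] at hmap_orbit_le_U

theorem IsIrreducibleDecomposition.map_ne_bot (hP : IsIrreducibleDecomposition ρ V P)
    (hgen : ∀ C, IsInvariantUnder ρ C → V.map (ρ x) ≤ C → V ≤ C) (i : ι) :
    (P i).map (ρ x) ≠ ⊥ := by
  intro hi
  have hothers : IsInvariantUnder ρ (⨆ (j) (_ : j ≠ i), P j) :=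
    .iSup fun j => .iSup fun _ => hP.invariant j
  have hV : V ≤ ⨆ (j) (_ : j ≠ i), P j := by
    refine hgen _ hothers ?_
    rw [← hP.iSup_eq, Submodule.map_iSup]
    refine iSup_le fun j => ?_
    obtain rfl | hj := eq_or_ne j i
    · exact hi.trans_le bot_le
    · exact ((hP.invariant j).map_le x).trans (le_iSup₂_of_le j hj le_rfl)
  have hle : P i ≤ ⨆ (j) (_ : j ≠ i), P j := ((le_iSup P i).trans_eq hP.iSup_eq).trans hV
  exact (hP.irreducible i).1 ((hP.indep i).eq_bot_of_le hle)

theorem IsIrreducibleDecomposition.corner (hone : 1 ∈ Set.range ρ)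
    (hmul : ∀ a b, ρ a * ρ b ∈ Set.range ρ) (hP : IsIrreducibleDecomposition ρ V P)
    (hidem : ∀ v ∈ V, ρ x (ρ x v) = ρ x v)
    (hgen : ∀ C, IsInvariantUnder ρ C → V.map (ρ x) ≤ C → V ≤ C) :
    IsIrreducibleDecomposition (corner ρ x) (V.map (ρ x)) fun i => (P i).map (ρ x) where
  invariant i := (hP.invariant i).corner x
  irreducible i := (hP.irreducible i).corner hone hmul (hP.invariant i)
    (fun v hv => hidem v (hP.iSup_eq.le (Submodule.mem_iSup_of_mem i hv))) (hP.map_ne_bot hgen i)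
  indep := hP.indep.mono fun i => (hP.invariant i).map_le x
  iSup_eq := by rw [← Submodule.map_iSup, hP.iSup_eq]

end Decomposition

section Length

variable {R M ι : Type*} [Ring R] [AddCommGroup M] [Module R M]

theorem length_iSup_of_isSimpleModule_of_fintype [Fintype ι] {P : ι → Submodule R M}
    (hP : iSupIndep P) (hsimple : ∀ i, IsSimpleModule R (P i)) :
    Module.length R (⨆ i, P i : Submodule R M) = Fintype.card ι := by
  classical
  rw [Submodule.iSup_eq_range_dfinsupp_lsum,
    ← (LinearEquiv.ofInjective _ hP.dfinsupp_lsum_injective).length_eq,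
    DFinsupp.linearEquivFunOnFintype.length_eq, Module.length_pi_of_fintype]
  simp [Module.length_eq_one]

theorem length_iSup_of_isSimpleModule {P : ι → Submodule R M} (hP : iSupIndep P)
    (hsimple : ∀ i, IsSimpleModule R (P i)) :
    Module.length R (⨆ i, P i : Submodule R M) = ENat.card ι := by
  cases finite_or_infinite ι
  · cases nonempty_fintype ι
    rw [length_iSup_of_isSimpleModule_of_fintype hP hsimple, ENat.card_eq_coe_fintype_card]
  · rw [ENat.card_eq_top_of_infinite, ENat.eq_top_iff_forall_ge]
    intro n
    obtain ⟨t, rfl⟩ := Infinite.exists_subset_card_eq ι n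
    have hle : ⨆ i : t, P i ≤ ⨆ i, P i := iSup_comp_le P _
    calc
      (t.card : ℕ∞) = Module.length R (⨆ i : t, P i : Submodule R M) := by
        rw [length_iSup_of_isSimpleModule_of_fintype (P := fun i : t => P i)
          (hP.comp Subtype.val_injective) fun i => hsimple i, Fintype.card_coe]
      _ ≤ Module.length R (⨆ i, P i : Submodule R M) :=
        Module.length_le_of_injective _ (Submodule.inclusion_injective hle)

end Length

section InvariantLength

variable {K M α ι κ : Type*} [CommRing K] [AddCommGroup M] [Module K M]
  {ρ : α → Module.End K M} {V W : Submodule K M} {P : ι → Submodule K M} {Q : κ → Submodule K M}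

/-- An invariant submodule, regarded as a submodule over the algebra generated by the operators, to
which the theory of length applies. -/
def IsInvariantUnder.adjoinSubmodule (hW : IsInvariantUnder ρ W) :
    Submodule (Algebra.adjoin K (Set.range ρ)) M where
  carrier := W
  add_mem' := W.add_mem
  zero_mem' := W.zero_mem
  smul_mem' := by
    rintro ⟨f, hf⟩ v hv
    change f v ∈ W
    induction hf using Algebra.adjoin_induction generalizing v with
    | mem _ hf =>
      obtain ⟨a, rfl⟩ := hf
      exact hW v hv a
    | algebraMap r => exact W.smul_mem r hv
    | add _ _ _ _ hf hg => exact W.add_mem (hf hv) (hg hv)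
    | mul _ _ _ _ hf hg => exact hf (hg hv)

@[simp]
theorem IsInvariantUnder.restrictScalars_adjoinSubmodule (hW : IsInvariantUnder ρ W) :
    hW.adjoinSubmodule.restrictScalars K = W := rfl

theorem isInvariantUnder_restrictScalars (N : Submodule (Algebra.adjoin K (Set.range ρ)) M) :
    IsInvariantUnder ρ (N.restrictScalars K) :=
  fun _ hv a => N.smul_mem ⟨ρ a, Algebra.subset_adjoin ⟨a, rfl⟩⟩ hv

theorem IsIrreducibleUnder.isSimpleModule_adjoinSubmodule (hirr : IsIrreducibleUnder ρ W)
    (hW : IsInvariantUnder ρ W) :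
    IsSimpleModule (Algebra.adjoin K (Set.range ρ)) hW.adjoinSubmodule := by
  rw [isSimpleModule_iff_isAtom]
  refine ⟨fun h => hirr.1 (congrArg (Submodule.restrictScalars K) h), fun N hN => ?_⟩
  obtain hbot | heq := hirr.2 _ hN.le (isInvariantUnder_restrictScalars N)
  · exact Submodule.restrictScalars_injective K _ _ hbot
  · exact absurd (Submodule.restrictScalars_injective K _ _ heq) hN.ne

theorem IsIrreducibleDecomposition.iSupIndep_adjoinSubmodule
    (hP : IsIrreducibleDecomposition ρ V P) :
    iSupIndep fun i => (hP.invariant i).adjoinSubmodule := by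
  intro i
  rw [disjoint_iff]
  apply Submodule.restrictScalars_injective K
  simpa [Submodule.restrictScalars_iSup] using (hP.indep i).eq_bot

theorem IsIrreducibleDecomposition.restrictScalars_iSup_adjoinSubmodule
    (hP : IsIrreducibleDecomposition ρ V P) :
    (⨆ i, (hP.invariant i).adjoinSubmodule).restrictScalars K = V := by
  simp [Submodule.restrictScalars_iSup, hP.iSup_eq]

theorem IsIrreducibleDecomposition.enatCard_eq (hP : IsIrreducibleDecomposition ρ V P)
    (hQ : IsIrreducibleDecomposition ρ V Q) : ENat.card ι = ENat.card κ := by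
  have hsup : ⨆ i, (hP.invariant i).adjoinSubmodule = ⨆ j, (hQ.invariant j).adjoinSubmodule :=
    Submodule.restrictScalars_injective K _ _ <|
      hP.restrictScalars_iSup_adjoinSubmodule.trans hQ.restrictScalars_iSup_adjoinSubmodule.symm
  rw [← length_iSup_of_isSimpleModule hP.iSupIndep_adjoinSubmodule fun i =>
      (hP.irreducible i).isSimpleModule_adjoinSubmodule (hP.invariant i), hsup,
    length_iSup_of_isSimpleModule hQ.iSupIndep_adjoinSubmodule fun j =>
      (hQ.irreducible j).isSimpleModule_adjoinSubmodule (hQ.invariant j)]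

end InvariantLength

section Shift

variable {A : Type*}

/-- The analogue for series of strong connectedness of the minimal automaton: the nonzero series
`σ · u` are all reachable from one another. -/
def RecurrentSeries (σ : List A → ℚ) : Prop :=
  ∀ u v : List A, shiftOp u σ ≠ 0 → shiftOp v σ ≠ 0 →
    ∃ w : List A, shiftOp (u ++ w) σ = shiftOp v σ

theorem shiftOp_append (u v : List A) : shiftOp (u ++ v) = shiftOp v * shiftOp u := by
  ext τ w
  simp [shiftOp]

theorem corner_shiftOp (x : List A) : corner shiftOp x = fun u => shiftOp (x ++ u ++ x) := by
  funext u
  simp only [corner, shiftOp_append, mul_assoc]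

theorem nonempty_leftQuot_of_shiftOp_charFun_ne_zero {S : Set (List A)} {u : List A}
    (hu : shiftOp u (charFun S) ≠ 0) : (leftQuot S u).Nonempty := by
  obtain ⟨v, hv⟩ := Function.ne_iff.1 hu
  exact ⟨v, Set.mem_of_indicator_ne_zero (f := (1 : List A → ℚ)) hv⟩

theorem Recurrent.recurrentSeries_charFun {S : Set (List A)} (hS : Recurrent S) :
    RecurrentSeries (charFun S) := fun u v hu hv =>
  (hS.2 u v (nonempty_leftQuot_of_shiftOp_charFun_ne_zero hu)
    (nonempty_leftQuot_of_shiftOp_charFun_ne_zero hv)).imp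
    fun _ hw => congrArg charFun hw

theorem exists_shiftOp_append_ne_zero {σ : List A → ℚ} {x : List A}
    (hx : (synSpace σ).map (shiftOp x) ≠ ⊥) : ∃ u, shiftOp (u ++ x) σ ≠ 0 := by
  contrapose! hx
  rw [eq_bot_iff, synSpace, Submodule.map_span_le]
  rintro _ ⟨u, rfl⟩
  simpa only [shiftOp_append, Module.End.mul_apply, Submodule.mem_bot] using hx u

theorem RecurrentSeries.synSpace_le {σ : List A → ℚ} (hσ : RecurrentSeries σ) {x : List A}
    (hx : (synSpace σ).map (shiftOp x) ≠ ⊥) {C : Submodule ℚ (List A → ℚ)}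
    (hC : InvariantSub C) (hle : (synSpace σ).map (shiftOp x) ≤ C) : synSpace σ ≤ C := by
  obtain ⟨u, hu⟩ := exists_shiftOp_append_ne_zero hx
  have huC : shiftOp (u ++ x) σ ∈ C := by
    rw [shiftOp_append]
    exact hle (Submodule.mem_map_of_mem (Submodule.subset_span (Set.mem_range_self u)))
  refine Submodule.span_le.2 (Set.range_subset_iff.2 fun v => ?_)
  rw [SetLike.mem_coe]
  obtain hv | hv := eq_or_ne (shiftOp v σ) 0
  · rw [hv]
    exact C.zero_mem
  · obtain ⟨w, hw⟩ := hσ (u ++ x) v hu hv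
    have hwC := hC _ huC w
    rwa [← Module.End.mul_apply, ← shiftOp_append, hw] at hwC

end Shift

end Birec

theorem card_irreducible_constituents_eq_general {A ι κ : Type*} {σ : List A → ℚ}
    (hσ : RecurrentSeries σ) {x : List A}
    (hidem : ∀ τ ∈ synSpace σ, shiftOp (x ++ x) τ = shiftOp x τ)
    (hx : (synSpace σ).map (shiftOp x) ≠ ⊥)
    {W : ι → Submodule ℚ (List A → ℚ)} {U : κ → Submodule ℚ (List A → ℚ)}
    (hW : IsIrreducibleDecomposition shiftOp (synSpace σ) W)
    (hU : IsIrreducibleDecomposition (fun u => shiftOp (x ++ u ++ x))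
      ((synSpace σ).map (shiftOp x)) U) :
    ENat.card ι = ENat.card κ := by
  have hWx : IsIrreducibleDecomposition (corner shiftOp x) ((synSpace σ).map (shiftOp x))
      fun i => (W i).map (shiftOp x) :=
    hW.corner ⟨[], rfl⟩ (fun u v => ⟨v ++ u, shiftOp_append v u⟩)
      (by simpa only [shiftOp_append, Module.End.mul_apply] using hidem)
      fun _ hC => hσ.synSpace_le hx hC
  rw [corner_shiftOp] at hWx
  exact hWx.enatCard_eq hU

/-- **Proposition.** Let `S` be a recurrent completely reducible set, `σ = 𝟙_S`, and
`ψ = ψ_σ` its syntactic representation.  The number of irreducible constituents of `ψ`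
equals the number of irreducible constituents of the restriction of `ψ` to the
Suschkevitch group of the finite monoid `ψ(A*)`.

The Suschkevitch group is realized as `ψ(x A* x)` acting on `V_σ · ψ(x)`, where `x` is a
word such that `ψ(x)` is an idempotent of the `0`-minimal ideal of `ψ(A*)` (an
idempotent of minimal nonzero rank).  The statement says: any decomposition of the
syntactic space into `ψ`-invariant irreducible subspaces and any decomposition of
`V_σ · ψ(x)` into subspaces invariant and irreducible under all the operators
`ψ(x u x)` have the same number of summands. -/
theorem card_irreducible_constituents_eq {A : Type*} [Fintype A] (S : Set (List A))
    (hrec : Recurrent S) (hcr : CompletelyReducibleLang S)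
    (x : List A)
    (hxidem : ∀ τ ∈ synSpace (charFun S), shiftOp (x ++ x) τ = shiftOp x τ)
    (hxmin : IsMinNonzeroPsiRank (charFun S) x)
    (n m : ℕ)
    (W : Fin n → Submodule ℚ (List A → ℚ)) (U : Fin m → Submodule ℚ (List A → ℚ))
    (hWle : ∀ i, W i ≤ synSpace (charFun S))
    (hWinv : ∀ i, InvariantSub (W i))
    (hWirr : ∀ i, IrreducibleSub (W i))
    (hWind : iSupIndep W)
    (hWsup : (⨆ i, W i) = synSpace (charFun S))
    (hUle : ∀ j, U j ≤ Submodule.map (shiftOp x) (synSpace (charFun S)))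
    (hUinv : ∀ j, ∀ τ ∈ U j, ∀ u : List A, shiftOp (x ++ u ++ x) τ ∈ U j)
    (hUirr : ∀ j, U j ≠ ⊥ ∧ ∀ U' : Submodule ℚ (List A → ℚ), U' ≤ U j →
      (∀ τ ∈ U', ∀ u : List A, shiftOp (x ++ u ++ x) τ ∈ U') → U' = ⊥ ∨ U' = U j)
    (hUind : iSupIndep U)
    (hUsup : (⨆ j, U j) = Submodule.map (shiftOp x) (synSpace (charFun S))) :
    n = m := by
  have hx : (synSpace (charFun S)).map (shiftOp x) ≠ ⊥ := fun h =>
    hxmin.1 (by rw [psiRank, h, finrank_bot])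
  simpa using card_irreducible_constituents_eq_general hrec.recurrentSeries_charFun hxidem hx
    ⟨hWinv, hWirr, hWind, hWsup⟩ ⟨hUinv, hUirr, hUind, hUsup⟩
end

section
/- Let S be a set recognized by a strongly connected unambiguous finite automaton 𝒜. If S is completely reducible over ℚ and dense, then φ_𝒜(S) meets every 𝓗-class of the minimal ideal of the transition monoid φ_𝒜(A*). -/
namespace Birec

/-- A (nondeterministic) finite automaton. -/
structure UFA (A : Type*) (Q : Type*) where
  step : Q → A → Set Q
  start : Set Q
  accept : Set Q

namespace UFA

variable {A Q : Type*}

/-- `IsPathTo M p w l q` holds iff `l` is the list of successive states (after each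
letter) of a path labelled `w` from `p` to `q` in `M`. -/
def IsPathTo (M : UFA A Q) : Q → List A → List Q → Q → Prop
  | p, [], l, q => p = q ∧ l = []
  | p, a :: w, l, q => ∃ r ∈ M.step p a, ∃ l' : List Q, l = r :: l' ∧ IsPathTo M r w l' q

/-- `M.rel w p q` holds iff there is a path labelled `w` from `p` to `q`. -/
def rel (M : UFA A Q) (w : List A) (p q : Q) : Prop :=
  ∃ l : List Q, M.IsPathTo p w l q

/-- The language recognized by the automaton. -/
def lang (M : UFA A Q) : Set (List A) :=
  {w | ∃ p ∈ M.start, ∃ q ∈ M.accept, M.rel w p q}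

/-- The automaton is unambiguous: for any word, there is at most one path from an
initial state to a terminal state with this label. -/
def Unambiguous (M : UFA A Q) : Prop :=
  ∀ (w : List A) (p₁ p₂ q₁ q₂ : Q) (l₁ l₂ : List Q),
    p₁ ∈ M.start → p₂ ∈ M.start → q₁ ∈ M.accept → q₂ ∈ M.accept →
    M.IsPathTo p₁ w l₁ q₁ → M.IsPathTo p₂ w l₂ q₂ → p₁ = p₂ ∧ l₁ = l₂

/-- The automaton is strongly connected. -/
def StronglyConnected (M : UFA A Q) : Prop := ∀ p q : Q, ∃ w : List A, M.rel w p q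

/-- The set `U · w` of states reachable from `U` by reading `w`. -/
def after (M : UFA A Q) (U : Set Q) (w : List A) : Set Q := {q | ∃ p ∈ U, M.rel w p q}

open Classical in
/-- The `{0,1}`-matrix `μ_𝒜(w)` of a word, with rational entries. -/
noncomputable def mat (M : UFA A Q) (w : List A) : Matrix Q Q ℚ :=
  Matrix.of fun p q => if M.rel w p q then (1 : ℚ) else 0

/-- The rank of a word with respect to an unambiguous automaton: the linear-algebra
rank of its transition matrix. -/
noncomputable def wrank [Fintype Q] (M : UFA A Q) (w : List A) : ℕ := (M.mat w).rank

end UFA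

/-- The transition morphism of an (unambiguous) automaton, with values in relations. -/
def UFA.phi {A Q : Type*} (M : UFA A Q) (w : List A) : Q → Q → Prop := M.rel w

/-- Composition of relations. -/
def rcomp {Q : Type*} (f g : Q → Q → Prop) : Q → Q → Prop := fun p q => ∃ r, f p r ∧ g r q

/-- Green's relation `𝓡` in a monoid `M` of relations. -/
def rGreenR {Q : Type*} (M : Set (Q → Q → Prop)) (m n : Q → Q → Prop) : Prop :=
  (∃ p ∈ M, rcomp m p = n) ∧ ∃ p ∈ M, rcomp n p = m

/-- Green's relation `𝓛` in a monoid `M` of relations. -/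
def rGreenL {Q : Type*} (M : Set (Q → Q → Prop)) (m n : Q → Q → Prop) : Prop :=
  (∃ p ∈ M, rcomp p m = n) ∧ ∃ p ∈ M, rcomp p n = m

/-- Green's relation `𝓗`. -/
def rGreenH {Q : Type*} (M : Set (Q → Q → Prop)) (m n : Q → Q → Prop) : Prop :=
  rGreenR M m n ∧ rGreenL M m n

/-- `I` is a (two-sided) ideal of the monoid `M` of relations. -/
def rIsIdeal {Q : Type*} (M I : Set (Q → Q → Prop)) : Prop :=
  I.Nonempty ∧ I ⊆ M ∧ ∀ m ∈ I, ∀ p ∈ M, ∀ q ∈ M, rcomp (rcomp p m) q ∈ I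

/-- `I` is the minimal ideal of the monoid `M` of relations. -/
def rIsMinimalIdeal {Q : Type*} (M I : Set (Q → Q → Prop)) : Prop :=
  rIsIdeal M I ∧ ∀ J : Set (Q → Q → Prop), rIsIdeal M J → I ⊆ J

end Birec


open Birec

/-!
Let `N` be the transition monoid, `e` an idempotent of its minimal ideal `K` and `G = eNe`, which
is a group. Since `K` is simple, `∑ g ∈ G, g y z = ∑ g ∈ G, g z` for all `y ∈ N` and `z ∈ K`. On an
irreducible representation, the vectors annihilated by `K` and the fixed vectors each form a
subrepresentation, so are all or nothing; playing these two alternatives against the identity shows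
that `∑ g ∈ G, x g y` acts there independently of `x, y ∈ N`. This passes to sums of irreducible
representations, hence, if `S` is completely reducible, the number of `g ∈ G` with `x g y ∈ φ(S)`
does not depend on `x` and `y`. It is positive for some `x` and `y` because `S` meets `K`; it is
therefore positive for `x = y = m`, and `m g m` lies in the `𝓗`-class of `m` when `m ∈ K`.
-/

namespace Birec

open MulOpposite

section MinimalIdeal

variable {N : Type*} [Monoid N] {e k m z : N}

/-- `m` lies in the minimal ideal of the monoid `N`, expressed without mentioning that ideal:
`m` belongs to every principal two-sided ideal. -/
def MemMinimalIdeal (m : N) : Prop := ∀ n : N, ∃ a b, a * n * b = m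

/-- Green's relation `𝓗` in an abstract monoid. -/
def GreenH (m n : N) : Prop :=
  ((∃ p, m * p = n) ∧ ∃ p, n * p = m) ∧ (∃ p, p * m = n) ∧ ∃ p, p * n = m

theorem MemMinimalIdeal.mul_left (hm : MemMinimalIdeal m) (a : N) : MemMinimalIdeal (a * m) := by
  intro n
  obtain ⟨b, c, rfl⟩ := hm n
  exact ⟨a * b, c, by simp only [mul_assoc]⟩

theorem MemMinimalIdeal.mul_right (hm : MemMinimalIdeal m) (a : N) : MemMinimalIdeal (m * a) := by
  intro n
  obtain ⟨b, c, rfl⟩ := hm n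
  exact ⟨b, c * a, by simp only [mul_assoc]⟩

theorem eq_pow_mul_mul_pow {a b : N} (h : a * m * b = m) (n : ℕ) : a ^ n * m * b ^ n = m := by
  induction n with
  | zero => simp
  | succ n ih =>
    calc a ^ (n + 1) * m * b ^ (n + 1) = a ^ n * (a * m * b) * b ^ n := by
          rw [pow_succ, pow_succ' b]; simp only [mul_assoc]
      _ = m := by rw [h, ih]

theorem MemMinimalIdeal.mem_of_mem_corner (he : MemMinimalIdeal e) (g : Subsemigroup.corner e) :
    MemMinimalIdeal (g : N) := by
  obtain ⟨_, n, rfl⟩ := g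
  exact (he.mul_right n).mul_right e

variable [Finite N]

theorem exists_pow_succ_isIdempotentElem (a : N) : ∃ n : ℕ, IsIdempotentElem (a ^ (n + 1)) := by
  let _ : TopologicalSpace N := ⊥
  have : DiscreteTopology N := ⟨rfl⟩
  obtain ⟨_, ⟨n, rfl⟩, hn⟩ := exists_idempotent_in_compact_subsemigroup
    (fun _ => continuous_of_discreteTopology) (Set.range fun n : ℕ => a ^ (n + 1))
    (Set.range_nonempty _) (Set.toFinite _).isCompact (by
      rintro _ ⟨i, rfl⟩ _ ⟨j, rfl⟩
      exact ⟨i + 1 + j, by rw [← pow_add, ← add_assoc]⟩)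
  exact ⟨n, hn⟩

theorem exists_mul_pow_succ_eq {a b : N} (h : a * m * b = m) : ∃ n : ℕ, m * b ^ (n + 1) = m := by
  obtain ⟨n, hn⟩ := exists_pow_succ_isIdempotentElem b
  refine ⟨n, ?_⟩
  rw [← eq_pow_mul_mul_pow h (n + 1), mul_assoc, hn.eq]

theorem exists_pow_succ_mul_eq {a b : N} (h : a * m * b = m) : ∃ n : ℕ, a ^ (n + 1) * m = m := by
  obtain ⟨n, hn⟩ := exists_pow_succ_isIdempotentElem a
  refine ⟨n, ?_⟩
  rw [← eq_pow_mul_mul_pow h (n + 1), ← mul_assoc, ← mul_assoc, hn.eq]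

theorem MemMinimalIdeal.exists_mul_mul_eq_right (hm : MemMinimalIdeal m) (p : N) :
    ∃ q, m * p * q = m := by
  obtain ⟨a, b, hab⟩ := hm (m * p)
  obtain ⟨n, hn⟩ := exists_mul_pow_succ_eq (b := p * b) (by simpa only [mul_assoc] using hab)
  exact ⟨b * (p * b) ^ n, by simpa only [pow_succ', mul_assoc] using hn⟩

theorem MemMinimalIdeal.exists_mul_mul_eq_left (hm : MemMinimalIdeal m) (p : N) :
    ∃ q, q * (p * m) = m := by
  obtain ⟨a, b, hab⟩ := hm (p * m)
  obtain ⟨n, hn⟩ := exists_pow_succ_mul_eq (a := a * p) (by simpa only [mul_assoc] using hab)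
  exact ⟨(a * p) ^ n * a, by simpa only [pow_succ, mul_assoc] using hn⟩

theorem MemMinimalIdeal.greenH_mul_mul (hm : MemMinimalIdeal m) (g : N) :
    GreenH (m * g * m) m := by
  refine ⟨⟨?_, g * m, (mul_assoc m g m).symm⟩, hm.exists_mul_mul_eq_left (m * g), m * g, rfl⟩
  simpa only [mul_assoc] using hm.exists_mul_mul_eq_right (g * m)

theorem MemMinimalIdeal.exists_isIdempotentElem (hk : MemMinimalIdeal k) :
    ∃ e : N, IsIdempotentElem e ∧ MemMinimalIdeal e := by
  obtain ⟨n, hn⟩ := exists_pow_succ_isIdempotentElem k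
  exact ⟨_, hn, pow_succ k n ▸ hk.mul_left (k ^ n)⟩

theorem MemMinimalIdeal.bijective_mul_right_corner (he : IsIdempotentElem e)
    (hmin : MemMinimalIdeal e) (c : Subsemigroup.corner e) :
    Function.Bijective fun g : Subsemigroup.corner e => g * c := by
  obtain ⟨q, hq⟩ := hmin.exists_mul_mul_eq_right c
  have hcq : (c : N) * q = e := by rwa [((Subsemigroup.mem_corner_iff he).1 c.2).1] at hq
  refine Finite.injective_iff_bijective.1 fun g g' h => Subtype.ext ?_
  calc (g : N) = g * c * q := by rw [mul_assoc, hcq, ((Subsemigroup.mem_corner_iff he).1 g.2).2]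
    _ = g' * c * q := congrArg (fun t : Subsemigroup.corner e => (t : N) * q) h
    _ = g' := by rw [mul_assoc, hcq, ((Subsemigroup.mem_corner_iff he).1 g'.2).2]

theorem MemMinimalIdeal.sum_corner_mul_mul {V : Type*} [AddCommMonoid V]
    [Fintype (Subsemigroup.corner e)] (he : IsIdempotentElem e) (hmin : MemMinimalIdeal e)
    (hz : MemMinimalIdeal z) (y : N) (F : N → V) :
    ∑ g : Subsemigroup.corner e, F (g * (y * z)) = ∑ g : Subsemigroup.corner e, F (g * z) := by
  obtain ⟨a, b, rfl⟩ := hz e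
  have sum_eq (t : N) : ∑ g : Subsemigroup.corner e, F (g * (t * (a * e * b))) =
      ∑ g : Subsemigroup.corner e, F (g * b) := by
    let c : Subsemigroup.corner e := ⟨e * (t * a) * e, t * a, rfl⟩
    rw [← (hmin.bijective_mul_right_corner he c).sum_comp fun g => F (g * b)]
    refine Fintype.sum_congr _ _ fun g => congrArg F ?_
    calc (g : N) * (t * (a * e * b)) = g * e * (t * (a * e * b)) := by
          rw [((Subsemigroup.mem_corner_iff he).1 g.2).2]
      _ = g * (e * (t * a) * e) * b := by simp only [mul_assoc]
  rw [sum_eq y, ← sum_eq 1, one_mul]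

end MinimalIdeal

section Representation

section Semiring

variable {k N V : Type*} [Semiring k] [Monoid N] [AddCommMonoid V] [Module k V]

theorem le_or_eq_zero_of_isAtom {ρ : Representation k N V} {W : Subrepresentation ρ}
    (hW : IsAtom W) (Z : Subrepresentation ρ) : W ≤ Z ∨ ∀ v ∈ W, v ∈ Z → v = 0 := by
  refine or_iff_not_imp_left.2 fun hle v hvW hvZ => ?_
  exact (hW.not_le_iff_disjoint.1 hle).le_bot (show v ∈ W ⊓ Z from ⟨hvW, hvZ⟩)

/-- The vectors fixed by a representation of a monoid. -/
def fixedVectors (ρ : Representation k N V) : Subrepresentation ρ where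
  toSubmodule := ⨅ n, LinearMap.eqLocus (ρ n) LinearMap.id
  apply_mem_toSubmodule n v hv := by
    simp only [Submodule.mem_iInf, LinearMap.mem_eqLocus, LinearMap.id_apply] at hv ⊢
    simp only [hv, implies_true]

theorem mem_fixedVectors {ρ : Representation k N V} {v : V} :
    v ∈ fixedVectors ρ ↔ ∀ n, ρ n v = v := by
  change v ∈ (fixedVectors ρ).toSubmodule ↔ _
  simp only [fixedVectors, Submodule.mem_iInf, LinearMap.mem_eqLocus, LinearMap.id_apply]

variable (ρ : Representation k Nᵐᵒᵖ V)

/-- The vectors annihilated by the minimal ideal of `N`, in a right representation of `N` (encoded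
as a representation of `Nᵐᵒᵖ`). -/
def minimalIdealAnnihilator : Subrepresentation ρ where
  toSubmodule := ⨅ (z : N) (_ : MemMinimalIdeal z), LinearMap.ker (ρ (op z))
  apply_mem_toSubmodule n v hv := by
    simp only [Submodule.mem_iInf, LinearMap.mem_ker] at hv ⊢
    intro z hz
    rw [← Module.End.mul_apply, ← map_mul]
    exact hv _ (hz.mul_left n.unop)

variable {ρ}

theorem mem_minimalIdealAnnihilator {v : V} :
    v ∈ minimalIdealAnnihilator ρ ↔ ∀ z : N, MemMinimalIdeal z → ρ (op z) v = 0 := by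
  change v ∈ (minimalIdealAnnihilator ρ).toSubmodule ↔ _
  simp only [minimalIdealAnnihilator, Submodule.mem_iInf, LinearMap.mem_ker]

theorem sum_op_mem {ι : Type*} [Fintype ι] (W : Subrepresentation ρ) {w : V} (hw : w ∈ W)
    (n : ι → N) : ∑ i, ρ (op (n i)) w ∈ W :=
  W.toSubmodule.sum_mem fun i _ => W.apply_mem_toSubmodule (op (n i)) hw

theorem apply_op_sum {ι : Type*} [Fintype ι] (n : ι → N) (z : N) (v : V) :
    ρ (op z) (∑ i, ρ (op (n i)) v) = ∑ i, ρ (op (n i * z)) v := by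
  simp only [map_sum, op_mul, map_mul, Module.End.mul_apply]

end Semiring

variable {k N V : Type*} [Ring k] [Monoid N] [AddCommGroup V] [Module k V]
  {ρ : Representation k Nᵐᵒᵖ V}
variable [Finite N] {e : N} [Fintype (Subsemigroup.corner e)] {W : Subrepresentation ρ} {w : V}

theorem sum_corner_mul_right_of_isAtom (he : IsIdempotentElem e) (hmin : MemMinimalIdeal e)
    (hW : IsAtom W) (hw : w ∈ W) (x y : N) :
    ∑ g : Subsemigroup.corner e, ρ (op (x * g * y)) w =
      ∑ g : Subsemigroup.corner e, ρ (op (x * g)) w := by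
  rcases le_or_eq_zero_of_isAtom hW (minimalIdealAnnihilator ρ) with hle | hzero
  · have ann := mem_minimalIdealAnnihilator.1 (hle hw)
    have hxg (g : Subsemigroup.corner e) := (hmin.mem_of_mem_corner g).mul_left x
    simp only [fun g => ann _ (hxg g), fun g => ann _ ((hxg g).mul_right y)]
  · refine sub_eq_zero.1 (hzero _ ?_ (mem_minimalIdealAnnihilator.2 fun z hz => ?_))
    · exact W.toSubmodule.sub_mem
        (sum_op_mem W hw fun g : Subsemigroup.corner e => x * g * y)
        (sum_op_mem W hw fun g : Subsemigroup.corner e => x * g)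
    · rw [map_sub, apply_op_sum, apply_op_sum, sub_eq_zero]
      simpa only [mul_assoc] using
        hmin.sum_corner_mul_mul he hz y fun n => ρ (op (x * n)) w

theorem sum_corner_mul_left_of_isAtom (he : IsIdempotentElem e) (hmin : MemMinimalIdeal e)
    (hW : IsAtom W) (hw : w ∈ W) (x : N) :
    ∑ g : Subsemigroup.corner e, ρ (op (x * g)) w = ∑ g : Subsemigroup.corner e, ρ (op g.1) w := by
  rcases le_or_eq_zero_of_isAtom hW (fixedVectors ρ) with hle | hzero
  · simp only [mem_fixedVectors.1 (hle hw)]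
  · have sum_eq_zero (x : N) : ∑ g : Subsemigroup.corner e, ρ (op (x * g)) w = 0 := by
      refine hzero _ (sum_op_mem W hw _) (mem_fixedVectors.2 fun n => ?_)
      rw [← op_unop n, apply_op_sum, sum_corner_mul_right_of_isAtom he hmin hW hw]
    simpa only [one_mul, sum_eq_zero x] using (sum_eq_zero 1).symm

theorem sum_corner_translate_of_mem_iSup {ι : Type*} {W : ι → Subrepresentation ρ}
    (he : IsIdempotentElem e) (hmin : MemMinimalIdeal e) (hW : ∀ i, IsAtom (W i))
    (hw : w ∈ ⨆ i, (W i).toSubmodule) (x y : N) :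
    ∑ g : Subsemigroup.corner e, ρ (op (x * g * y)) w =
      ∑ g : Subsemigroup.corner e, ρ (op g.1) w := by
  induction hw using Submodule.iSup_induction' with
  | mem i v hv =>
    rw [sum_corner_mul_right_of_isAtom he hmin (hW i) hv,
      sum_corner_mul_left_of_isAtom he hmin (hW i) hv]
  | zero => simp only [map_zero]
  | add v v' _ _ hv hv' => simp only [map_add, Finset.sum_add_distrib, hv, hv']

end Representation

section RecognizedSeries

variable {A N : Type*} [Monoid N]

/-- The right representation of `N` on functions `N → k` given by `(f · x) n = f (x * n)`. -/
def translateRep (k N : Type*) [Semiring k] [Monoid N] : Representation k Nᵐᵒᵖ (N → k) where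
  toFun x := LinearMap.funLeft k k (x.unop * ·)
  map_one' := by ext; simp
  map_mul' x y := by ext; simp [mul_assoc]

/-- The series `f ∘ φ` recognized by a morphism `φ : A* → N`, as a linear function of `f`. -/
def recognizedSeries (φ : FreeMonoid A →* N) : (N → ℚ) →ₗ[ℚ] (List A → ℚ) :=
  LinearMap.funLeft ℚ ℚ fun w => φ (FreeMonoid.ofList w)

theorem shiftOp_recognizedSeries (φ : FreeMonoid A →* N) (u : List A) (f : N → ℚ) :
    shiftOp u (recognizedSeries φ f) =
      recognizedSeries φ (translateRep ℚ N (op (φ (FreeMonoid.ofList u))) f) := by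
  funext v
  exact congrArg f (map_mul φ (FreeMonoid.ofList u) (FreeMonoid.ofList v))

theorem synSpace_recognizedSeries_le_range (φ : FreeMonoid A →* N) (f : N → ℚ) :
    synSpace (recognizedSeries φ f) ≤ LinearMap.range (recognizedSeries φ) := by
  rw [synSpace, Submodule.span_le]
  rintro _ ⟨u, rfl⟩
  exact ⟨_, (shiftOp_recognizedSeries φ u f).symm⟩

variable {φ : FreeMonoid A →* N} {W : Submodule ℚ (List A → ℚ)}

theorem recognizedSeries_injective (hφ : Function.Surjective φ) :
    Function.Injective (recognizedSeries φ) :=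
  LinearMap.funLeft_injective_of_surjective ℚ ℚ _ hφ

theorem invariantSub_map_recognizedSeries (B : Subrepresentation (translateRep ℚ N)) :
    InvariantSub (B.toSubmodule.map (recognizedSeries φ)) := by
  rintro _ ⟨f, hf, rfl⟩ u
  rw [shiftOp_recognizedSeries]
  exact Submodule.mem_map_of_mem (B.apply_mem_toSubmodule _ hf)

/-- The functions `f` on `N` whose recognized series `f ∘ φ` lies in a given shift-invariant
space, as a subrepresentation. -/
def InvariantSub.comapRecognizedSeries (hφ : Function.Surjective φ) (hW : InvariantSub W) :
    Subrepresentation (translateRep ℚ N) where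
  toSubmodule := W.comap (recognizedSeries φ)
  apply_mem_toSubmodule n f hf := by
    obtain ⟨u, hu⟩ := hφ n.unop
    have hmem := hW _ hf u.toList
    rwa [shiftOp_recognizedSeries, FreeMonoid.ofList_toList, hu] at hmem

theorem IrreducibleSub.isAtom_comapRecognizedSeries (hφ : Function.Surjective φ)
    (hW : InvariantSub W) (hirr : IrreducibleSub W)
    (hrange : W ≤ LinearMap.range (recognizedSeries φ)) :
    IsAtom (hW.comapRecognizedSeries hφ) := by
  have map_comap : (W.comap (recognizedSeries φ)).map (recognizedSeries φ) = W :=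
    Submodule.map_comap_eq_of_le hrange
  have map_inj := Submodule.map_injective_of_injective (recognizedSeries_injective hφ)
  refine ⟨fun hbot => hirr.1 ?_, fun B hB => Subrepresentation.toSubmodule_injective ?_⟩
  · rw [← map_comap, show W.comap (recognizedSeries φ) = ⊥ from
      congrArg Subrepresentation.toSubmodule hbot, Submodule.map_bot]
  · rcases hirr.2 _ (Submodule.map_le_iff_le_comap.2 hB.le) (invariantSub_map_recognizedSeries B)
      with hzero | htop
    · exact map_inj (hzero.trans (Submodule.map_bot _).symm)
    · exact absurd (Subrepresentation.toSubmodule_injective (map_inj (htop.trans map_comap.symm)))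
        hB.ne

theorem CompletelyReducibleSeries.exists_isAtom_mem_iSup (hφ : Function.Surjective φ) {f : N → ℚ}
    (hf : CompletelyReducibleSeries (recognizedSeries φ f)) :
    ∃ (n : ℕ) (B : Fin n → Subrepresentation (translateRep ℚ N)),
      (∀ i, IsAtom (B i)) ∧ f ∈ ⨆ i, (B i).toSubmodule := by
  obtain ⟨n, W, hW, -, hsup⟩ := hf
  have hrange (i : Fin n) := (hW i).1.trans (synSpace_recognizedSeries_le_range φ f)
  refine ⟨n, fun i => (hW i).2.1.comapRecognizedSeries hφ,
    fun i => (hW i).2.2.isAtom_comapRecognizedSeries hφ _ (hrange i), ?_⟩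
  have hmap : (⨆ i, (W i).comap (recognizedSeries φ)).map (recognizedSeries φ) =
      synSpace (recognizedSeries φ f) := by
    simp only [Submodule.map_iSup, fun i => Submodule.map_comap_eq_of_le (hrange i), hsup]
  have hmem : recognizedSeries φ f ∈ synSpace (recognizedSeries φ f) :=
    Submodule.subset_span ⟨[], rfl⟩
  rw [← hmap] at hmem
  obtain ⟨f', hf', heq⟩ := hmem
  exact recognizedSeries_injective hφ heq ▸ hf'

variable [Finite N] {e : N}

theorem CompletelyReducibleSeries.sum_corner_translate [Fintype (Subsemigroup.corner e)]
    (hφ : Function.Surjective φ) {f : N → ℚ}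
    (hf : CompletelyReducibleSeries (recognizedSeries φ f)) (he : IsIdempotentElem e)
    (hmin : MemMinimalIdeal e) (x y : N) :
    ∑ g : Subsemigroup.corner e, f (x * g * y) = ∑ g : Subsemigroup.corner e, f g := by
  obtain ⟨n, B, hB, hmem⟩ := hf.exists_isAtom_mem_iSup hφ
  have hsum := congrFun (sum_corner_translate_of_mem_iSup he hmin hB hmem x y) 1
  simpa [translateRep] using hsum

theorem CompletelyReducibleLang.exists_mul_mul_mem (hφ : Function.Surjective φ) {P : Set N}
    (hP : CompletelyReducibleLang {w | φ (FreeMonoid.ofList w) ∈ P}) {k : N}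
    (hk : MemMinimalIdeal k) (hkP : k ∈ P) (m : N) : ∃ g, m * g * m ∈ P := by
  obtain ⟨e, he, hmin⟩ := hk.exists_isIdempotentElem
  obtain ⟨a, b, rfl⟩ := hk e
  have := Fintype.ofFinite (Subsemigroup.corner e)
  have hseries : CompletelyReducibleSeries (recognizedSeries φ (P.indicator 1)) := hP
  have hsum (x y : N) := hseries.sum_corner_translate hφ he hmin x y
  have hpos : 0 < ∑ g : Subsemigroup.corner e, P.indicator (1 : N → ℚ) (a * g * b) := by
    refine Finset.sum_pos' (fun g _ => Set.indicator_nonneg (fun _ _ => zero_le_one) _)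
      ⟨⟨e, (Subsemigroup.mem_corner_iff he).2 ⟨he, he⟩⟩, Finset.mem_univ _, ?_⟩
    simp [hkP]
  rw [hsum, ← hsum m m] at hpos
  obtain ⟨g, -, hg⟩ := Finset.exists_ne_zero_of_sum_ne_zero hpos.ne'
  exact ⟨g, Set.mem_of_indicator_ne_zero hg⟩

theorem CompletelyReducibleLang.exists_greenH (hφ : Function.Surjective φ) {P : Set N}
    (hP : CompletelyReducibleLang {w | φ (FreeMonoid.ofList w) ∈ P}) {k m : N}
    (hk : MemMinimalIdeal k) (hkP : k ∈ P) (hm : MemMinimalIdeal m) : ∃ n ∈ P, GreenH n m := by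
  obtain ⟨g, hg⟩ := hP.exists_mul_mul_mem hφ hk hkP m
  exact ⟨m * g * m, hg, hm.greenH_mul_mul g⟩

end RecognizedSeries

namespace UFA

variable {A Q : Type*} (M : UFA A Q)

theorem phi_nil : M.phi [] = Eq := by
  funext p q
  simp [phi, rel, IsPathTo]

theorem phi_cons (a : A) (w : List A) :
    M.phi (a :: w) = rcomp (fun p r => r ∈ M.step p a) (M.phi w) := by
  funext p q
  apply propext
  constructor
  · rintro ⟨_, r, hr, l, -, hl⟩
    exact ⟨r, hr, l, hl⟩
  · rintro ⟨r, hr, l, hl⟩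
    exact ⟨r :: l, r, hr, l, rfl, hl⟩

theorem phi_append (u v : List A) : M.phi (u ++ v) = rcomp (M.phi u) (M.phi v) := by
  induction u with
  | nil => rw [phi_nil]; exact Relation.eq_comp.symm
  | cons a u ih => rw [List.cons_append, phi_cons, ih, phi_cons]; exact Relation.comp_assoc.symm

/-- The transition monoid `φ_𝒜(A*)`, as a type. -/
def TransitionMonoid : Type _ := Set.range M.phi

instance : Monoid M.TransitionMonoid where
  mul m n := ⟨rcomp m.1 n.1, by
    obtain ⟨⟨_, u, rfl⟩, ⟨_, v, rfl⟩⟩ := m, n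
    exact ⟨u ++ v, M.phi_append u v⟩⟩
  one := ⟨Eq, [], M.phi_nil⟩
  mul_assoc _ _ _ := Subtype.ext Relation.comp_assoc
  one_mul _ := Subtype.ext Relation.eq_comp
  mul_one _ := Subtype.ext Relation.comp_eq

/-- The transition morphism, corestricted to the transition monoid. -/
def transitionHom : FreeMonoid A →* M.TransitionMonoid where
  toFun w := ⟨M.phi w.toList, w.toList, rfl⟩
  map_one' := Subtype.ext M.phi_nil
  map_mul' u v := Subtype.ext (M.phi_append u.toList v.toList)

theorem transitionHom_surjective : Function.Surjective M.transitionHom := by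
  rintro ⟨_, w, rfl⟩
  exact ⟨FreeMonoid.ofList w, rfl⟩

variable {M}

theorem memMinimalIdeal_of_rIsMinimalIdeal {K : Set (Q → Q → Prop)}
    (hK : rIsMinimalIdeal (Set.range M.phi) K) {m : M.TransitionMonoid} (hm : m.1 ∈ K) :
    MemMinimalIdeal m := by
  intro n
  have hideal : rIsIdeal (Set.range M.phi)
      (Set.range fun ab : M.TransitionMonoid × M.TransitionMonoid => (ab.1 * n * ab.2).1) := by
    refine ⟨Set.range_nonempty_iff_nonempty.2 ⟨1, 1⟩, ?_, ?_⟩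
    · rintro _ ⟨⟨a, b⟩, rfl⟩
      exact (a * n * b).2
    · rintro _ ⟨⟨a, b⟩, rfl⟩ p hp q hq
      let p' : M.TransitionMonoid := ⟨p, hp⟩
      let q' : M.TransitionMonoid := ⟨q, hq⟩
      exact ⟨(p' * a, b * q'), congrArg Subtype.val
        (show p' * a * n * (b * q') = p' * (a * n * b) * q' by simp only [mul_assoc])⟩
  obtain ⟨⟨a, b⟩, hab⟩ := hK.2 _ hideal hm
  exact ⟨a, b, Subtype.ext hab⟩

theorem rGreenH_of_greenH {m n : M.TransitionMonoid} (h : GreenH m n) :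
    rGreenH (Set.range M.phi) m.1 n.1 := by
  obtain ⟨⟨⟨p, hp⟩, ⟨q, hq⟩⟩, ⟨r, hr⟩, ⟨s, hs⟩⟩ := h
  exact ⟨⟨⟨p.1, p.2, congrArg Subtype.val hp⟩, ⟨q.1, q.2, congrArg Subtype.val hq⟩⟩,
    ⟨r.1, r.2, congrArg Subtype.val hr⟩, ⟨s.1, s.2, congrArg Subtype.val hs⟩⟩

end UFA

theorem LangDense.exists_phi_mem {A Q : Type*} {S : Set (List A)} (hS : LangDense S) {M : UFA A Q}
    {I : Set (Q → Q → Prop)} (hI : rIsIdeal (Set.range M.phi) I) : ∃ w ∈ S, M.phi w ∈ I := by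
  obtain ⟨⟨_, hm⟩, hsub, hmul⟩ := hI
  obtain ⟨w, rfl⟩ := hsub hm
  obtain ⟨u, v, huv⟩ := hS w
  refine ⟨u ++ w ++ v, huv, ?_⟩
  rw [M.phi_append, M.phi_append]
  exact hmul _ hm _ ⟨u, rfl⟩ _ ⟨v, rfl⟩

end Birec

theorem phi_meets_every_H_class_general {A Q : Type*} (M : UFA A Q)
    (hfin : (Set.range M.phi).Finite) (hcr : CompletelyReducibleLang M.lang)
    (K : Set (Q → Q → Prop)) (hK : rIsMinimalIdeal (Set.range M.phi) K)
    (hmeet : ∃ w ∈ M.lang, M.phi w ∈ K) (m : Q → Q → Prop) (hm : m ∈ K) :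
    ∃ u ∈ M.lang, rGreenH (Set.range M.phi) (M.phi u) m := by
  have : Finite M.TransitionMonoid := hfin
  let P : Set M.TransitionMonoid := {n | ∃ p ∈ M.start, ∃ q ∈ M.accept, n.1 p q}
  have hP : CompletelyReducibleLang {w | M.transitionHom (FreeMonoid.ofList w) ∈ P} := hcr
  obtain ⟨w, hw, hwK⟩ := hmeet
  obtain ⟨⟨_, u, rfl⟩, hu, hgreen⟩ := hP.exists_greenH (k := M.transitionHom (FreeMonoid.ofList w))
    (m := ⟨m, hK.1.2.1 hm⟩) M.transitionHom_surjective
    (UFA.memMinimalIdeal_of_rIsMinimalIdeal hK hwK) hw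
    (UFA.memMinimalIdeal_of_rIsMinimalIdeal hK hm)
  exact ⟨u, hu, UFA.rGreenH_of_greenH hgreen⟩

/-- **Corollary.** Let `S` be a set recognized by a strongly connected unambiguous
finite automaton `𝒜`.  If `S` is completely reducible over `ℚ` and dense, then
`φ_𝒜(S)` meets every `𝓗`-class of the minimal ideal of the transition monoid
`φ_𝒜(A*)`. -/
theorem phi_meets_every_H_class {A Q : Type*} [Fintype A] [Fintype Q]
    (M : UFA A Q) (hconn : M.StronglyConnected) (hunamb : M.Unambiguous)
    (hcr : CompletelyReducibleLang M.lang) (hdense : LangDense M.lang)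
    (K : Set (Q → Q → Prop)) (hK : rIsMinimalIdeal (Set.range M.phi) K)
    (m : Q → Q → Prop) (hm : m ∈ K) :
    ∃ u ∈ M.lang, rGreenH (Set.range M.phi) (M.phi u) m :=
  phi_meets_every_H_class_general M (Set.toFinite _) hcr K hK (hdense.exists_phi_mem hK.1) m hm
end
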